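/- arXiv:2003.13286 — 7 statements merged into one kernel-verified Lean document; each statement's English description precedes it below -/
import Mathlib

section
/- Let n, p, λ be real numbers with λ ≠ 0 and define h(r, ρ) = (r² + λ²·ρ²)^p · r^{2(n−p)} for r > 0. Then at every point (r, ρ) with r > 0, the flat Laplacian of log h satisfies ∂²_{rr} log h + ∂²_{ρρ} log h = −2·[(n−p)/r² − p·(λ² − 1)·(r² − λ²·ρ²)/(r² + λ²·ρ²)²]. Consequently the Gaussian curvature K = −(1/(2h))·(∂²_{rr} log h + ∂²_{ρρ} log h) of the conformal metric h·(dr²+dρ²) equals h^{-1}·[(n−p)/r² − p·(λ²−1)·(r² − λ²·ρ²)/(r² + λ²·ρ²)²]. -/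
open Real

/-!
The logarithm splits `h` into `p · log (r² + λ²ρ²) + 2(n - p) · log r`, and the Laplacian is linear,
so only the Laplacians of these two logarithms are needed. For a quadratic form `S = ar² + bρ²` the
two second derivatives of `log S` are `2a(bρ² - ar²) / S²` and `2b(ar² - bρ²) / S²`: they share a
numerator up to sign, which is where the factor `λ² - 1` comes from.
-/

open scoped Topology

theorem deriv_deriv_add {𝕜 F : Type*} [NontriviallyNormedField 𝕜] [NormedAddCommGroup F]
    [NormedSpace 𝕜 F] {f g : 𝕜 → F} {x : 𝕜} (hf : ContDiffAt 𝕜 2 f x) (hg : ContDiffAt 𝕜 2 g x) :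
    deriv (deriv fun t => f t + g t) x = deriv (deriv f) x + deriv (deriv g) x := by
  simpa only [iteratedDeriv_succ, iteratedDeriv_zero] using iteratedDeriv_fun_add hf hg

theorem deriv_deriv_log {f : ℝ → ℝ} {x : ℝ} (hf : ContDiffAt ℝ 2 f x) (hx : f x ≠ 0) :
    deriv (deriv fun t => log (f t)) x =
      (deriv (deriv f) x * f x - deriv f x ^ 2) / f x ^ 2 := by
  have deriv_log_eq : deriv (fun t => log (f t)) =ᶠ[𝓝 x] fun t => deriv f t / f t := by
    filter_upwards [hf.eventually (by simp), hf.continuousAt.eventually_ne hx] with t hft ht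
    exact deriv.log (hft.differentiableAt two_ne_zero) ht
  have hf' : DifferentiableAt ℝ (deriv f) x :=
    (hf.derivWithin one_add_one_eq_two.le).differentiableAt one_ne_zero
  rw [deriv_log_eq.deriv_eq, deriv_fun_div hf' (hf.differentiableAt two_ne_zero) hx, sq (deriv f x)]

theorem deriv_deriv_log_mul_sq_add {a c x : ℝ} (hx : a * x ^ 2 + c ≠ 0) :
    deriv (deriv fun t => log (a * t ^ 2 + c)) x =
      2 * a * (c - a * x ^ 2) / (a * x ^ 2 + c) ^ 2 := by
  have first_deriv : deriv (fun t : ℝ => a * t ^ 2 + c) = fun t => 2 * a * t := by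
    funext t
    rw [deriv_add_const, deriv_const_mul_field, deriv_pow_field]
    ring
  rw [deriv_deriv_log (f := fun t => a * t ^ 2 + c) (by fun_prop) hx, first_deriv,
    deriv_const_mul_field, deriv_id'']
  ring

/-- The flat Laplacian `∂²ᵣᵣ u + ∂²ᵨᵨ u` at `z = (r, ρ)`, written with iterated partial derivatives;
where one of these does not exist it contributes the junk value `0` of `deriv`. -/
noncomputable def planeLaplacian (u : ℝ × ℝ → ℝ) (z : ℝ × ℝ) : ℝ :=
  deriv (deriv fun x => u (x, z.2)) z.1 + deriv (deriv fun y => u (z.1, y)) z.2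

/-- The Gaussian curvature of the conformal metric `h (dr² + dρ²)` at `z = (r, ρ)`, with the formula
`-(1 / 2h) Δ log h` taken as the definition. -/
noncomputable def conformalCurvature (h : ℝ × ℝ → ℝ) (z : ℝ × ℝ) : ℝ :=
  -(1 / (2 * h z)) * planeLaplacian (fun w => log (h w)) z

section Laplacian

variable {u v f g : ℝ × ℝ → ℝ} {z : ℝ × ℝ}

theorem planeLaplacian_congr (h : u =ᶠ[𝓝 z] v) : planeLaplacian u z = planeLaplacian v z := by
  have hr : (fun x => u (x, z.2)) =ᶠ[𝓝 z.1] fun x => v (x, z.2) :=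
    h.comp_tendsto (Continuous.prodMk_left z.2).continuousAt
  have hρ : (fun y => u (z.1, y)) =ᶠ[𝓝 z.2] fun y => v (z.1, y) :=
    h.comp_tendsto (Continuous.prodMk_right z.1).continuousAt
  simp only [planeLaplacian, hr.deriv.deriv_eq, hρ.deriv.deriv_eq]

theorem planeLaplacian_const_mul (c : ℝ) (u : ℝ × ℝ → ℝ) (z : ℝ × ℝ) :
    planeLaplacian (fun w => c * u w) z = c * planeLaplacian u z := by
  simp only [planeLaplacian, deriv_const_mul_field', deriv_const_mul_field, mul_add]

theorem planeLaplacian_add (hu : ContDiffAt ℝ 2 u z) (hv : ContDiffAt ℝ 2 v z) :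
    planeLaplacian (fun w => u w + v w) z = planeLaplacian u z + planeLaplacian v z := by
  have hr : ContDiffAt ℝ 2 (fun x : ℝ => (x, z.2)) z.1 := by fun_prop
  have hρ : ContDiffAt ℝ 2 (fun y : ℝ => (z.1, y)) z.2 := by fun_prop
  exact (congrArg₂ (· + ·) (deriv_deriv_add (hu.comp z.1 hr) (hv.comp z.1 hr))
    (deriv_deriv_add (hu.comp z.2 hρ) (hv.comp z.2 hρ))).trans (add_add_add_comm _ _ _ _)

theorem planeLaplacian_log_rpow_mul_rpow (hf : ContDiffAt ℝ 2 f z) (hg : ContDiffAt ℝ 2 g z)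
    (hfz : 0 < f z) (hgz : 0 < g z) (p q : ℝ) :
    planeLaplacian (fun w => log (f w ^ p * g w ^ q)) z =
      p * planeLaplacian (fun w => log (f w)) z + q * planeLaplacian (fun w => log (g w)) z := by
  have log_split : (fun w => log (f w ^ p * g w ^ q)) =ᶠ[𝓝 z]
      fun w => p * log (f w) + q * log (g w) := by
    filter_upwards [hf.continuousAt.eventually_const_lt hfz,
      hg.continuousAt.eventually_const_lt hgz] with w hfw hgw
    rw [log_mul (rpow_pos_of_pos hfw p).ne' (rpow_pos_of_pos hgw q).ne', log_rpow hfw,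
      log_rpow hgw]
  rw [planeLaplacian_congr log_split,
    planeLaplacian_add (contDiffAt_const.mul (hf.log hfz.ne'))
      (contDiffAt_const.mul (hg.log hgz.ne')),
    planeLaplacian_const_mul, planeLaplacian_const_mul]

theorem conformalCurvature_eq_inv_mul {h : ℝ × ℝ → ℝ} {κ : ℝ}
    (hκ : planeLaplacian (fun w => log (h w)) z = -2 * κ) :
    conformalCurvature h z = (h z)⁻¹ * κ := by
  rw [conformalCurvature, hκ, one_div, mul_inv]
  ring

end Laplacian

theorem planeLaplacian_log_quadratic {a b : ℝ} {z : ℝ × ℝ} (hz : a * z.1 ^ 2 + b * z.2 ^ 2 ≠ 0) :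
    planeLaplacian (fun w => log (a * w.1 ^ 2 + b * w.2 ^ 2)) z =
      2 * (b - a) * (a * z.1 ^ 2 - b * z.2 ^ 2) / (a * z.1 ^ 2 + b * z.2 ^ 2) ^ 2 := by
  have second_deriv_fst := deriv_deriv_log_mul_sq_add hz
  have second_deriv_snd :
      deriv (deriv fun y => log (a * z.1 ^ 2 + b * y ^ 2)) z.2 =
        2 * b * (a * z.1 ^ 2 - b * z.2 ^ 2) / (a * z.1 ^ 2 + b * z.2 ^ 2) ^ 2 := by
    simpa only [add_comm (a * z.1 ^ 2)] using
      deriv_deriv_log_mul_sq_add (a := b) (c := a * z.1 ^ 2) (x := z.2) (by rwa [add_comm])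
  rw [planeLaplacian, second_deriv_fst, second_deriv_snd]
  ring

theorem planeLaplacian_log_fst (z : ℝ × ℝ) :
    planeLaplacian (fun w => log w.1) z = -(z.1 ^ 2)⁻¹ := by
  simp [planeLaplacian]

/-- the flat Laplacian of `log h` for
`h(r,ρ) = (r² + λ²ρ²)^p · r^{2(n−p)}`, and the resulting Gaussian curvature
of the conformal metric `h·(dr²+dρ²)`. -/
theorem laplacian_log_conformal_factor (n p lam : ℝ) (hlam : lam ≠ 0) (r ρ : ℝ) (hr : r > 0) :
    deriv (deriv (fun r' : ℝ =>
        Real.log ((r' ^ 2 + lam ^ 2 * ρ ^ 2) ^ p * r' ^ (2 * (n - p))))) r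
      + deriv (deriv (fun ρ' : ℝ =>
        Real.log ((r ^ 2 + lam ^ 2 * ρ' ^ 2) ^ p * r ^ (2 * (n - p))))) ρ
      = -2 * ((n - p) / r ^ 2
          - p * (lam ^ 2 - 1) * (r ^ 2 - lam ^ 2 * ρ ^ 2) / (r ^ 2 + lam ^ 2 * ρ ^ 2) ^ 2) ∧
    -(1 / (2 * ((r ^ 2 + lam ^ 2 * ρ ^ 2) ^ p * r ^ (2 * (n - p)))))
        * (deriv (deriv (fun r' : ℝ =>
            Real.log ((r' ^ 2 + lam ^ 2 * ρ ^ 2) ^ p * r' ^ (2 * (n - p))))) r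
          + deriv (deriv (fun ρ' : ℝ =>
            Real.log ((r ^ 2 + lam ^ 2 * ρ' ^ 2) ^ p * r ^ (2 * (n - p))))) ρ)
      = ((r ^ 2 + lam ^ 2 * ρ ^ 2) ^ p * r ^ (2 * (n - p)))⁻¹
          * ((n - p) / r ^ 2
            - p * (lam ^ 2 - 1) * (r ^ 2 - lam ^ 2 * ρ ^ 2) / (r ^ 2 + lam ^ 2 * ρ ^ 2) ^ 2) := by
  let h : ℝ × ℝ → ℝ := fun w => (w.1 ^ 2 + lam ^ 2 * w.2 ^ 2) ^ p * w.1 ^ (2 * (n - p))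
  have hS : 0 < r ^ 2 + lam ^ 2 * ρ ^ 2 := by positivity
  have laplacian_log_S : planeLaplacian (fun w => log (w.1 ^ 2 + lam ^ 2 * w.2 ^ 2)) (r, ρ) =
      2 * (lam ^ 2 - 1) * (r ^ 2 - lam ^ 2 * ρ ^ 2) / (r ^ 2 + lam ^ 2 * ρ ^ 2) ^ 2 := by
    simpa only [one_mul] using
      planeLaplacian_log_quadratic (a := 1) (b := lam ^ 2) (z := (r, ρ)) (by simpa using hS.ne')
  have laplacian_log_h : planeLaplacian (fun w => log (h w)) (r, ρ) = -2 * ((n - p) / r ^ 2 -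
      p * (lam ^ 2 - 1) * (r ^ 2 - lam ^ 2 * ρ ^ 2) / (r ^ 2 + lam ^ 2 * ρ ^ 2) ^ 2) := by
    rw [planeLaplacian_log_rpow_mul_rpow (by fun_prop) contDiffAt_fst hS hr, laplacian_log_S,
      planeLaplacian_log_fst]
    ring
  exact ⟨laplacian_log_h, conformalCurvature_eq_inv_mul laplacian_log_h⟩
end

section
/- Let n, p be real numbers with n > p > 0, let λ > 1, and let t > 0 satisfy n − p = p·(λ² − 1)/(1 + λ²·t²). Then for every r > 0, ((r² + λ²·t²·r²)^p · r^{2(n−p)})^{-1} · [(n−p)/r² − p·(λ² − 1)·(r² − λ²·t²·r²)/(r² + λ²·t²·r²)²] = (2·(n−p)/((1 + λ²·t²)^p · r^{2(n+1)})) · (1 − 1/(1 + λ²·t²)). That is, along the cone curve ρ = t·r (with t = tan θ), the Gaussian curvature of the canonical metric equals K(r) = 2(n−p)·(1 − 1/(1+λ²t²)) / ((1+λ²t²)^p · r^{2(n+1)}). -/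
open Real

/-!
Along the ray `ρ = t r` the metric is homogeneous in `r`: with `a = λ²t²`, the conformal factor is
`(1 + a)^p r^(2n)` and the bracket in the curvature is `r⁻²` times a constant. The balancing
condition `p(λ² - 1) = (n - p)(1 + a)` then turns that constant into
`(n - p)(1 - (1 - a)/(1 + a)) = 2(n - p)(1 - 1/(1 + a))`.
-/

/-- The factor `h` of the canonical metric `h (dr² + dρ²)` on the quotient space, in the region
`0 < r`. -/
noncomputable def canonicalConformalFactor (n p lam r ρ : ℝ) : ℝ :=
  (r ^ 2 + lam ^ 2 * ρ ^ 2) ^ p * r ^ (2 * (n - p))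

/-- The Gaussian curvature of the canonical metric `h (dr² + dρ²)` in the region `0 < r`, encoded by
the closed form of `-(∂ᵣ² + ∂ᵨ²) (log h) / (2h)`. -/
noncomputable def canonicalCurvature (n p lam r ρ : ℝ) : ℝ :=
  (canonicalConformalFactor n p lam r ρ)⁻¹
    * ((n - p) / r ^ 2
      - p * (lam ^ 2 - 1) * (r ^ 2 - lam ^ 2 * ρ ^ 2) / (r ^ 2 + lam ^ 2 * ρ ^ 2) ^ 2)

section Ray

variable (n p lam t : ℝ) {r : ℝ}

theorem canonicalConformalFactor_ray (hr : 0 < r) :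
    canonicalConformalFactor n p lam r (t * r) = (1 + lam ^ 2 * t ^ 2) ^ p * r ^ (2 * n) :=
  calc
    (r ^ 2 + lam ^ 2 * (t * r) ^ 2) ^ p * r ^ (2 * (n - p))
        = ((1 + lam ^ 2 * t ^ 2) * r ^ 2) ^ p * r ^ (2 * (n - p)) := by ring_nf
    _ = (1 + lam ^ 2 * t ^ 2) ^ p * (r ^ (2 * p) * r ^ (2 * (n - p))) := by
      rw [mul_rpow (by positivity) (by positivity), rpow_mul hr.le 2 p, rpow_two, mul_assoc]
    _ = (1 + lam ^ 2 * t ^ 2) ^ p * r ^ (2 * n) := by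
      rw [← rpow_add hr, ← mul_add, add_sub_cancel]

theorem canonicalCurvature_ray (hr : 0 < r) :
    canonicalCurvature n p lam r (t * r)
      = (n - p - p * (lam ^ 2 - 1) * (1 - lam ^ 2 * t ^ 2) / (1 + lam ^ 2 * t ^ 2) ^ 2)
        / ((1 + lam ^ 2 * t ^ 2) ^ p * r ^ (2 * (n + 1))) := by
  have bracket_eq :
      (n - p) / r ^ 2 - p * (lam ^ 2 - 1) * (r ^ 2 - lam ^ 2 * (t * r) ^ 2)
          / (r ^ 2 + lam ^ 2 * (t * r) ^ 2) ^ 2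
        = (n - p - p * (lam ^ 2 - 1) * (1 - lam ^ 2 * t ^ 2) / (1 + lam ^ 2 * t ^ 2) ^ 2)
          / r ^ 2 := by
    have sum_eq : r ^ 2 + lam ^ 2 * (t * r) ^ 2 = (1 + lam ^ 2 * t ^ 2) * r ^ 2 := by ring
    rw [sum_eq]
    field_simp
  have rpow_eq : r ^ (2 * (n + 1)) = r ^ (2 * n) * r ^ 2 := by
    rw [mul_add, mul_one, rpow_add hr, rpow_two]
  rw [canonicalCurvature, canonicalConformalFactor_ray n p lam t hr, bracket_eq, rpow_eq,
    ← mul_assoc, inv_mul_eq_div, div_div, mul_comm (r ^ 2)]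

end Ray

theorem curvature_along_cone_curve_general {n p lam t r : ℝ}
    (hbal : n - p = p * (lam ^ 2 - 1) / (1 + lam ^ 2 * t ^ 2)) (hr : 0 < r) :
    canonicalCurvature n p lam r (t * r)
      = 2 * (n - p) / ((1 + lam ^ 2 * t ^ 2) ^ p * r ^ (2 * (n + 1)))
        * (1 - 1 / (1 + lam ^ 2 * t ^ 2)) := by
  have hpos : 0 < 1 + lam ^ 2 * t ^ 2 := by positivity
  have balance : p * (lam ^ 2 - 1) = (n - p) * (1 + lam ^ 2 * t ^ 2) :=
    ((eq_div_iff hpos.ne').1 hbal).symm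
  have constant_eq :
      n - p - p * (lam ^ 2 - 1) * (1 - lam ^ 2 * t ^ 2) / (1 + lam ^ 2 * t ^ 2) ^ 2
        = 2 * (n - p) * (1 - 1 / (1 + lam ^ 2 * t ^ 2)) := by
    rw [balance]
    field_simp
    ring
  rw [canonicalCurvature_ray n p lam t hr, constant_eq, mul_div_right_comm]

/-- along the cone curve `ρ = t·r`, the Gaussian curvature of the
canonical metric equals `2(n−p)(1 − 1/(1+λ²t²)) / ((1+λ²t²)^p · r^{2(n+1)})`. -/
theorem curvature_along_cone_curve (n p lam t : ℝ)
    (hnp : n > p) (hp : p > 0) (hlam : lam > 1) (ht : t > 0)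
    (hbal : n - p = p * (lam ^ 2 - 1) / (1 + lam ^ 2 * t ^ 2)) :
    ∀ r > (0 : ℝ),
      ((r ^ 2 + lam ^ 2 * t ^ 2 * r ^ 2) ^ p * r ^ (2 * (n - p)))⁻¹
          * ((n - p) / r ^ 2
            - p * (lam ^ 2 - 1) * (r ^ 2 - lam ^ 2 * t ^ 2 * r ^ 2)
              / (r ^ 2 + lam ^ 2 * t ^ 2 * r ^ 2) ^ 2)
        = 2 * (n - p) / ((1 + lam ^ 2 * t ^ 2) ^ p * r ^ (2 * (n + 1)))
            * (1 - 1 / (1 + lam ^ 2 * t ^ 2)) := by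
  intro r hr
  simpa only [canonicalCurvature, canonicalConformalFactor, mul_pow, ← mul_assoc] using
    curvature_along_cone_curve_general hbal hr
end

section
/- Let n, p, k be positive real numbers with n > p and set λ² = k·(k+n−1)/p. Assume p·λ² > n and λ > 1, and set t² = (p·λ² − n)/(λ²·(n − p)). Then 2·(n−p)·(1 − 1/(1 + λ²·t²))·(1 + t²)/(n+1)² = 2·(k² + k·n − k − n)·n/((k+n−1)·k·(n+1)²). In other words, in the arc-length parameter s along the LOC curve, the Gaussian curvature of the canonical metric is K(s) = a/s² with a = 2(k²+kn−k−n)n/((k+n−1)k(n+1)²). -/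
open Real

/-!
Write `T = t²` and `L = λ²`. The slope equation says `L T (n - p) = p L - n`, and rearranging it
gives `p L (1 + T) = n (1 + L T)`. In the coefficient `(n - p) · (L T / (1 + L T)) · (1 + T)` the
factor `(n - p) L T` is therefore `p L - n` and the ratio `(1 + T) / (1 + L T)` is `n / (p L)`.
The relation `p L = k (k + n - 1)` turns the result into a function of `n` and `k`.
-/

section LocSlope

variable {F : Type*} [Field F] {n p L : F}

/-- The squared slope `tan² θ` of the LOC curve `ρ = tan θ · r` of an LOMSE of `(n, p, k)`-type, as
a function of the square `L = λ²` of the nonzero singular value. -/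
def locSlopeSq (n p L : F) : F := (p * L - n) / (L * (n - p))

lemma sub_mul_mul_locSlopeSq (hL : L ≠ 0) (hnp : n ≠ p) :
    (n - p) * (L * locSlopeSq n p L) = p * L - n := by
  have hnp' : n - p ≠ 0 := sub_ne_zero.mpr hnp
  rw [locSlopeSq]
  field_simp

lemma mul_one_add_locSlopeSq (hL : L ≠ 0) (hnp : n ≠ p) :
    p * L * (1 + locSlopeSq n p L) = n * (1 + L * locSlopeSq n p L) := by
  linear_combination -sub_mul_mul_locSlopeSq hL hnp

lemma one_add_locSlopeSq_div (hp : p ≠ 0) (hL : L ≠ 0) (hnp : n ≠ p)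
    (hden : 1 + L * locSlopeSq n p L ≠ 0) :
    (1 + locSlopeSq n p L) / (1 + L * locSlopeSq n p L) = n / (p * L) := by
  rw [div_eq_div_iff hden (mul_ne_zero hp hL), mul_comm, mul_one_add_locSlopeSq hL hnp]

lemma sub_mul_one_sub_mul_one_add_locSlopeSq (hp : p ≠ 0) (hL : L ≠ 0) (hnp : n ≠ p)
    (hden : 1 + L * locSlopeSq n p L ≠ 0) :
    (n - p) * (1 - 1 / (1 + L * locSlopeSq n p L)) * (1 + locSlopeSq n p L)
      = (p * L - n) * (n / (p * L)) := by
  rw [← sub_mul_mul_locSlopeSq hL hnp, ← one_add_locSlopeSq_div hp hL hnp hden,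
    one_sub_div hden, add_sub_cancel_left]
  ring

theorem curvature_coefficient_general {k T : F} (hp : p ≠ 0) (hL₀ : L ≠ 0) (hnp : n ≠ p)
    (hn : n + 1 ≠ 0) (hden : 1 + L * T ≠ 0) (hL : L = k * (k + n - 1) / p)
    (hT : T = (p * L - n) / (L * (n - p))) :
    2 * (n - p) * (1 - 1 / (1 + L * T)) * (1 + T) / (n + 1) ^ 2
      = 2 * (k ^ 2 + k * n - k - n) * n / ((k + n - 1) * k * (n + 1) ^ 2) := by
  obtain rfl : T = locSlopeSq n p L := hT
  have hpL : p * L = (k + n - 1) * k := by rw [hL, mul_div_cancel₀ _ hp, mul_comm]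
  have hnum : k ^ 2 + k * n - k - n = p * L - n := by rw [hpL]; ring
  rw [hnum, ← hpL]
  calc 2 * (n - p) * (1 - 1 / (1 + L * locSlopeSq n p L)) * (1 + locSlopeSq n p L) / (n + 1) ^ 2
    _ = 2 * ((n - p) * (1 - 1 / (1 + L * locSlopeSq n p L)) * (1 + locSlopeSq n p L))
          / (n + 1) ^ 2 := by ring
    _ = 2 * ((p * L - n) * (n / (p * L))) / (n + 1) ^ 2 := by
      rw [sub_mul_one_sub_mul_one_add_locSlopeSq hp hL₀ hnp hden]
    _ = 2 * (p * L - n) * n / (p * L * (n + 1) ^ 2) := by field_simp [hn]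

end LocSlope

/-- in the arc-length parameter, the Gaussian curvature of the
canonical metric along the LOC curve is `K(s) = a/s²` with
`a = 2(k²+kn−k−n)n/((k+n−1)k(n+1)²)`. -/
theorem curvature_coefficient (n p k lam t : ℝ)
    (hn : 0 < n) (hp : 0 < p) (hk : 0 < k) (hnp : n > p)
    (hlam2 : lam ^ 2 = k * (k + n - 1) / p)
    (hpl : p * lam ^ 2 > n) (hlam : lam > 1)
    (ht2 : t ^ 2 = (p * lam ^ 2 - n) / (lam ^ 2 * (n - p))) :
    2 * (n - p) * (1 - 1 / (1 + lam ^ 2 * t ^ 2)) * (1 + t ^ 2) / (n + 1) ^ 2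
      = 2 * (k ^ 2 + k * n - k - n) * n / ((k + n - 1) * k * (n + 1) ^ 2) := by
  have hlam0 : lam ^ 2 ≠ 0 := pow_ne_zero 2 (zero_lt_one.trans hlam).ne'
  exact curvature_coefficient_general hp.ne' hlam0 hnp.ne' (by positivity) (by positivity) hlam2 ht2
end

section
/- Let a be a real number with 4a ≤ 1. If J : (0, ∞) → ℝ is twice differentiable and satisfies J''(s) + (a/s²)·J(s) = 0 for all s > 0, and J vanishes at two distinct points s₁, s₂ with 0 < s₁ < s₂, then J is identically zero on (0, ∞). Consequently, when 4a ≤ 1 the LOC segment contains no pair of conjugate points and has index zero (it is stable). -/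
open Real

/-!
If `u` is a nowhere vanishing solution of `y'' + q y = 0` and `J` is any other solution, then
`(J / u)' = W / u ^ 2`, where the Wronskian `W` of `u` and `J` is constant. Two zeros of `J` are
two zeros of `J / u`, so Rolle's theorem gives a zero of `W`. Hence `W` is identically zero, `J / u`
is constant, and `J` vanishes everywhere.

For `q s = a / s ^ 2` the power `s ^ p` is a solution exactly when `p * (1 - p) = a`, and this
quadratic equation has a real root when `4 * a ≤ 1`.
-/

section Wronskian

variable {𝕜 : Type*}

/-- The Wronskian determinant of two functions, used to compare two solutions of a second-order
linear equation. The sign is chosen so that it is the numerator of `(g / f)'`. -/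
noncomputable def wronskianDet [NontriviallyNormedField 𝕜] (f g : 𝕜 → 𝕜) (s : 𝕜) : 𝕜 :=
  f s * deriv g s - deriv f s * g s

theorem hasDerivAt_div_wronskianDet [NontriviallyNormedField 𝕜] {f g : 𝕜 → 𝕜} {s : 𝕜}
    (hf : DifferentiableAt 𝕜 f s) (hg : DifferentiableAt 𝕜 g s) (hs : f s ≠ 0) :
    HasDerivAt (g / f) (wronskianDet f g s / f s ^ 2) s :=
  (hg.hasDerivAt.div hf.hasDerivAt hs).congr_deriv (by rw [wronskianDet]; ring)

theorem eqOn_zero_of_wronskianDet_eq_zero [RCLike 𝕜] {f g : 𝕜 → 𝕜} {S : Set 𝕜}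
    (hS : IsOpen S) (hS' : IsPreconnected S) (hf : ∀ s ∈ S, DifferentiableAt 𝕜 f s)
    (hg : ∀ s ∈ S, DifferentiableAt 𝕜 g s) (hf₀ : ∀ s ∈ S, f s ≠ 0)
    (hW : S.EqOn (wronskianDet f g) 0) {s₀ : 𝕜} (hs₀ : s₀ ∈ S) (hgs₀ : g s₀ = 0) :
    S.EqOn g 0 := by
  have hderiv : ∀ s ∈ S, HasDerivAt (g / f) 0 s := fun s hs =>
    (hasDerivAt_div_wronskianDet (hf s hs) (hg s hs) (hf₀ s hs)).congr_deriv (by simp [hW hs])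
  intro s hs
  have hconst : (g / f) s = (g / f) s₀ :=
    hS.is_const_of_deriv_eq_zero hS'
      (fun t ht => (hderiv t ht).differentiableAt.differentiableWithinAt)
      (fun t ht => (hderiv t ht).deriv) hs hs₀
  simpa [hgs₀, hf₀ s hs] using hconst

theorem exists_wronskianDet_eq_zero {f g : ℝ → ℝ} {s₁ s₂ : ℝ} (h₁₂ : s₁ < s₂)
    (hf : ∀ s ∈ Set.Icc s₁ s₂, DifferentiableAt ℝ f s)
    (hg : ∀ s ∈ Set.Icc s₁ s₂, DifferentiableAt ℝ g s)
    (hf₀ : ∀ s ∈ Set.Icc s₁ s₂, f s ≠ 0) (hg₁ : g s₁ = 0) (hg₂ : g s₂ = 0) :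
    ∃ c ∈ Set.Ioo s₁ s₂, wronskianDet f g c = 0 := by
  have hderiv : ∀ s ∈ Set.Icc s₁ s₂, HasDerivAt (g / f) (wronskianDet f g s / f s ^ 2) s :=
    fun s hs => hasDerivAt_div_wronskianDet (hf s hs) (hg s hs) (hf₀ s hs)
  obtain ⟨c, hc, hc₀⟩ := exists_hasDerivAt_eq_zero h₁₂ (HasDerivAt.continuousOn hderiv)
    (by simp [hg₁, hg₂]) fun s hs => hderiv s (Set.Ioo_subset_Icc_self hs)
  have hfc : f c ^ 2 ≠ 0 := pow_ne_zero 2 (hf₀ c (Set.Ioo_subset_Icc_self hc))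
  exact ⟨c, hc, (div_eq_zero_iff.mp hc₀).resolve_right hfc⟩

end Wronskian

/-- `y` solves the scalar Jacobi equation `y'' + q y = 0` at every point of `S`. Derivatives are
two-sided also at boundary points of `S`, and their existence is part of the definition. -/
structure IsJacobiSolutionOn {𝕜 : Type*} [NontriviallyNormedField 𝕜] (q y : 𝕜 → 𝕜)
    (S : Set 𝕜) : Prop where
  differentiableAt : ∀ s ∈ S, DifferentiableAt 𝕜 y s
  differentiableAt_deriv : ∀ s ∈ S, DifferentiableAt 𝕜 (deriv y) s
  deriv_deriv_add : ∀ s ∈ S, deriv (deriv y) s + q s * y s = 0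

namespace IsJacobiSolutionOn

theorem hasDerivAt_wronskianDet {𝕜 : Type*} [NontriviallyNormedField 𝕜] {q u y : 𝕜 → 𝕜}
    {S : Set 𝕜} (hu : IsJacobiSolutionOn q u S) (hy : IsJacobiSolutionOn q y S)
    {s : 𝕜} (hs : s ∈ S) : HasDerivAt (wronskianDet u y) 0 s := by
  have hW := ((hu.differentiableAt s hs).hasDerivAt.mul
      (hy.differentiableAt_deriv s hs).hasDerivAt).sub
    ((hu.differentiableAt_deriv s hs).hasDerivAt.mul (hy.differentiableAt s hs).hasDerivAt)
  refine hW.congr_deriv ?_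
  linear_combination u s * hy.deriv_deriv_add s hs - y s * hu.deriv_deriv_add s hs

theorem wronskianDet_eq {𝕜 : Type*} [RCLike 𝕜] {q u y : 𝕜 → 𝕜} {S : Set 𝕜}
    (hS : IsOpen S) (hS' : IsPreconnected S) (hu : IsJacobiSolutionOn q u S)
    (hy : IsJacobiSolutionOn q y S) {s t : 𝕜} (hs : s ∈ S) (ht : t ∈ S) :
    wronskianDet u y s = wronskianDet u y t :=
  hS.is_const_of_deriv_eq_zero hS'
    (fun _ hr => (hu.hasDerivAt_wronskianDet hy hr).differentiableAt.differentiableWithinAt)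
    (fun _ hr => (hu.hasDerivAt_wronskianDet hy hr).deriv) hs ht

theorem eqOn_zero_of_two_zeros {q u y : ℝ → ℝ} {S : Set ℝ} (hS : IsOpen S)
    (hS' : IsPreconnected S) (hu : IsJacobiSolutionOn q u S) (hu₀ : ∀ s ∈ S, u s ≠ 0)
    (hy : IsJacobiSolutionOn q y S) {s₁ s₂ : ℝ} (hs₁ : s₁ ∈ S) (hs₂ : s₂ ∈ S)
    (h₁₂ : s₁ < s₂) (hy₁ : y s₁ = 0) (hy₂ : y s₂ = 0) : S.EqOn y 0 := by
  have hsub : Set.Icc s₁ s₂ ⊆ S := hS'.Icc_subset hs₁ hs₂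
  obtain ⟨c, hc, hWc⟩ := exists_wronskianDet_eq_zero h₁₂
    (fun s hs => hu.differentiableAt s (hsub hs)) (fun s hs => hy.differentiableAt s (hsub hs))
    (fun s hs => hu₀ s (hsub hs)) hy₁ hy₂
  have hW : S.EqOn (wronskianDet u y) 0 := fun s hs =>
    (hu.wronskianDet_eq hS hS' hy hs (hsub (Set.Ioo_subset_Icc_self hc))).trans hWc
  exact eqOn_zero_of_wronskianDet_eq_zero hS hS' hu.differentiableAt hy.differentiableAt hu₀ hW
    hs₁ hy₁

end IsJacobiSolutionOn

theorem isJacobiSolutionOn_rpow (p : ℝ) :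
    IsJacobiSolutionOn (fun s => p * (1 - p) / s ^ 2) (fun s => s ^ p) (Set.Ioi 0) where
  differentiableAt s hs := differentiableAt_rpow_const_of_ne p (ne_of_gt hs)
  differentiableAt_deriv s hs := by
    rw [deriv_rpow_const']
    exact (differentiableAt_rpow_const_of_ne (p - 1) (ne_of_gt hs)).const_mul p
  deriv_deriv_add s hs := by
    have hs₀ : s ≠ 0 := ne_of_gt hs
    rw [deriv_rpow_const', deriv_const_mul_field, Real.deriv_rpow_const, rpow_sub_one hs₀,
      rpow_sub_one hs₀]
    field_simp
    ring

theorem exists_mul_one_sub_eq {a : ℝ} (ha : 4 * a ≤ 1) : ∃ p : ℝ, p * (1 - p) = a := by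
  have hsq : √(1 - 4 * a) ^ 2 = 1 - 4 * a := sq_sqrt (by linarith)
  exact ⟨(1 + √(1 - 4 * a)) / 2, by linear_combination -hsq / 4⟩

/-- when `4a ≤ 1`, a solution of the Jacobi equation
`J'' + (a/s²)J = 0` on `(0,∞)` vanishing at two distinct points is identically
zero (no conjugate points: the LOC segment is stable). -/
theorem jacobi_no_conjugate_points (a : ℝ) (ha : 4 * a ≤ 1) (J : ℝ → ℝ)
    (hdiff : ∀ s > (0 : ℝ), DifferentiableAt ℝ J s ∧ DifferentiableAt ℝ (deriv J) s)
    (hode : ∀ s > (0 : ℝ), deriv (deriv J) s + a / s ^ 2 * J s = 0)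
    (s₁ s₂ : ℝ) (hs₁ : 0 < s₁) (hs₁₂ : s₁ < s₂)
    (hJ₁ : J s₁ = 0) (hJ₂ : J s₂ = 0) :
    ∀ s > (0 : ℝ), J s = 0 := by
  obtain ⟨p, rfl⟩ := exists_mul_one_sub_eq ha
  have hJ : IsJacobiSolutionOn (fun s => p * (1 - p) / s ^ 2) J (Set.Ioi 0) :=
    ⟨fun s hs => (hdiff s hs).1, fun s hs => (hdiff s hs).2, hode⟩
  have hrpow₀ : ∀ s ∈ Set.Ioi (0 : ℝ), s ^ p ≠ 0 := fun s hs => (rpow_pos_of_pos hs p).ne'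
  exact (isJacobiSolutionOn_rpow p).eqOn_zero_of_two_zeros isOpen_Ioi isPreconnected_Ioi hrpow₀
    hJ hs₁ (hs₁.trans hs₁₂) hs₁₂ hJ₁ hJ₂
end

section
/- Let a be a real number with 4a > 1 and set β = √(4a − 1)/2. Then the function J(s) = √s · sin(β · log s) satisfies J''(s) + (a/s²)·J(s) = 0 for all s > 0, is not identically zero, and vanishes at the infinitely many points s_m = exp(m·π/β) for every integer m; in particular J has infinitely many zeros in the interval (0, 1]. Consequently, when 4a > 1 every point of the LOC segment has infinitely many conjugate points along the segment (the segment is unstable). -/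
open Real

/-!
The Jacobi equation `J'' + (a / s²) J = 0` is an Euler equation, so it has constant coefficients in
the variable `t = log s`. Writing `J s = √s · y (log s)` also removes the first-order term, leaving
`y'' + (a - 1/4) y = 0`, which for `4a > 1` is the harmonic oscillator of frequency
`β = √(4a - 1) / 2`. Its zeros are equally spaced in `t`, so those of `J` accumulate geometrically
at `s = 0`.
-/

open Filter
open scoped Topology

section EulerSubstitution

variable {E : Type*} [NormedAddCommGroup E] [NormedSpace ℝ E] {y y' : ℝ → E} {s : ℝ}

theorem hasDerivAt_rpow_smul_comp_log {v : E} (r : ℝ) (hs : s ≠ 0)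
    (hy : HasDerivAt y v (log s)) :
    HasDerivAt (fun x => x ^ r • y (log x)) (s ^ (r - 1) • (r • y (log s) + v)) s := by
  have hpow : HasDerivAt (fun x : ℝ => x ^ r) (r * s ^ (r - 1)) s :=
    hasDerivAt_rpow_const (Or.inl hs)
  have hcomp : HasDerivAt (fun x => y (log x)) (s⁻¹ • v) s :=
    hy.scomp s (hasDerivAt_log hs)
  refine (hpow.smul hcomp).congr_deriv ?_
  rw [rpow_sub_one hs]
  module

theorem deriv_deriv_rpow_smul_comp_log {w : E} (r : ℝ) (hs : s ≠ 0)
    (hy : ∀ t, HasDerivAt y (y' t) t) (hy' : HasDerivAt y' w (log s)) :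
    deriv (deriv fun x => x ^ r • y (log x)) s =
      s ^ (r - 2) • (w + (2 * r - 1) • y' (log s) + (r * (r - 1)) • y (log s)) := by
  have hderiv : deriv (fun x => x ^ r • y (log x)) =ᶠ[𝓝 s]
      fun x => x ^ (r - 1) • (r • y (log x) + y' (log x)) := by
    filter_upwards [eventually_ne_nhds hs] with x hx
    exact (hasDerivAt_rpow_smul_comp_log r hx (hy _)).deriv
  have hinner : HasDerivAt (fun t => r • y t + y' t) (r • y' (log s) + w) (log s) :=
    ((hy _).const_smul r).add hy'
  rw [hderiv.deriv_eq, (hasDerivAt_rpow_smul_comp_log (r - 1) hs hinner).deriv,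
    show r - 1 - 1 = r - 2 by ring]
  module

end EulerSubstitution

/-- The Jacobi field of frequency `β` along the LOC segment that vanishes at `s = 1`, as a function
of the arc length `s`. Only its values at `s > 0` are meaningful. -/
noncomputable def locJacobiField (β s : ℝ) : ℝ :=
  √s * sin (β * log s)

namespace locJacobiField

variable {β : ℝ}

theorem deriv_deriv_add_eq_zero (β : ℝ) {s : ℝ} (hs : s ≠ 0) :
    deriv (deriv (locJacobiField β)) s + (β ^ 2 + 1 / 4) / s ^ 2 * locJacobiField β s = 0 := by
  have hlin (t : ℝ) : HasDerivAt (fun t => β * t) β t := hasDerivAt_const_mul β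
  have hsin (t : ℝ) : HasDerivAt (fun t => sin (β * t)) (cos (β * t) * β) t := (hlin t).sin
  have hcos (t : ℝ) : HasDerivAt (fun t => cos (β * t) * β) (-sin (β * t) * β * β) t :=
    (hlin t).cos.mul_const β
  have hJ : locJacobiField β = fun x => x ^ (1 / 2 : ℝ) • sin (β * log x) := by
    ext x
    rw [locJacobiField, sqrt_eq_rpow, smul_eq_mul]
  have hpow : s ^ (1 / 2 - 2 : ℝ) = s ^ (1 / 2 : ℝ) / s ^ 2 := rpow_sub_natCast hs _ 2
  rw [hJ, deriv_deriv_rpow_smul_comp_log (1 / 2) hs hsin (hcos _), hpow]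
  simp only [smul_eq_mul]
  ring

theorem exp_eq_zero_iff {t : ℝ} : locJacobiField β (exp t) = 0 ↔ sin (β * t) = 0 := by
  rw [locJacobiField, log_exp, mul_eq_zero, or_iff_right (sqrt_pos.2 (exp_pos t)).ne']

theorem exp_int_mul_pi_div (hβ : β ≠ 0) (m : ℤ) : locJacobiField β (exp (m * π / β)) = 0 := by
  rw [exp_eq_zero_iff, mul_div_cancel₀ _ hβ, sin_int_mul_pi]

theorem exists_pos_ne_zero (hβ : β ≠ 0) : ∃ s > 0, locJacobiField β s ≠ 0 := by
  refine ⟨exp (π / 2 / β), exp_pos _, ?_⟩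
  rw [Ne, exp_eq_zero_iff, mul_div_cancel₀ _ hβ, sin_pi_div_two]
  exact one_ne_zero

theorem frequently_eq_zero (hβ : 0 < β) : ∃ᶠ s in 𝓝[>] 0, locJacobiField β s = 0 := by
  have hexponent : Tendsto (fun m : ℤ => m * π / β) atBot atBot :=
    ((tendsto_intCast_atBot_iff.2 tendsto_id).atBot_mul_const pi_pos).atBot_div_const hβ
  have hzeros : Tendsto (fun m : ℤ => exp (m * π / β)) atBot (𝓝[>] 0) :=
    tendsto_exp_atBot_nhdsGT.comp hexponent
  exact hzeros.frequently (Frequently.of_forall (exp_int_mul_pi_div hβ.ne'))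

theorem infinite_zeros_Ioc (hβ : 0 < β) {c : ℝ} (hc : 0 < c) :
    {s | s ∈ Set.Ioc 0 c ∧ locJacobiField β s = 0}.Infinite := by
  have hfreq : ∃ᶠ s in 𝓝[>] 0, s ∈ Set.Ioc 0 c ∧ locJacobiField β s = 0 :=
    (frequently_eq_zero hβ).and_eventually (Ioc_mem_nhdsGT hc) |>.mono fun _ => And.symm
  exact frequently_cofinite_iff_infinite.1 <|
    hfreq.filter_mono ((nhdsGT_le_nhdsNE 0).trans (nhdsNE_le_cofinite 0))

end locJacobiField

/-- when `4a > 1`, the function `J(s) = √s·sin(β·log s)` with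
`β = √(4a−1)/2` solves the Jacobi equation, is not identically zero, vanishes
at the points `exp(mπ/β)` for all integers `m`, and has infinitely many zeros
in `(0,1]` (the LOC segment is unstable). -/
theorem jacobi_conjugate_points (a : ℝ) (ha : 4 * a > 1) (β : ℝ)
    (hβ : β = Real.sqrt (4 * a - 1) / 2) :
    (∀ s > (0 : ℝ),
      deriv (deriv (fun s : ℝ => Real.sqrt s * Real.sin (β * Real.log s))) s
        + a / s ^ 2 * (Real.sqrt s * Real.sin (β * Real.log s)) = 0) ∧
    ¬ (∀ s > (0 : ℝ), Real.sqrt s * Real.sin (β * Real.log s) = 0) ∧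
    (∀ m : ℤ, Real.sqrt (Real.exp (m * π / β))
        * Real.sin (β * Real.log (Real.exp (m * π / β))) = 0) ∧
    {s : ℝ | s ∈ Set.Ioc (0 : ℝ) 1 ∧
        Real.sqrt s * Real.sin (β * Real.log s) = 0}.Infinite := by
  have hβ_pos : 0 < β := by
    rw [hβ]
    exact half_pos (sqrt_pos.2 (by linarith))
  have ha_eq : a = β ^ 2 + 1 / 4 := by
    rw [hβ, div_pow, sq_sqrt (by linarith)]
    ring
  refine ⟨fun s hs => ?_, fun hzero => ?_, locJacobiField.exp_int_mul_pi_div hβ_pos.ne',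
    locJacobiField.infinite_zeros_Ioc hβ_pos one_pos⟩
  · rw [ha_eq]
    exact locJacobiField.deriv_deriv_add_eq_zero β hs.ne'
  · obtain ⟨s, hs, hne⟩ := locJacobiField.exists_pos_ne_zero hβ_pos.ne'
    exact hne (hzero s hs)
end

section
/- Let n ≥ 3 be an odd integer and k ≥ 2 an even integer. Then (n² − 6n + 1)·k² + (n−1)·(n² − 6n + 1)·k + 8·n² ≠ 0; equivalently, a = 2·(k² + k·n − k − n)·n/((k+n−1)·k·(n+1)²) is never equal to 1/4. -/
open Real

/-!
Write `D = n² - 6n + 1`, so that the quadratic is `D k (k + n - 1) + 8 n²`. Since `D` is coprime to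
`n`, a zero forces `D ∣ 8`; as `D = (n - 3)² - 8`, this leaves only `-1 ≤ n ≤ 7`. For a root `k` in
the integers the discriminant in `k` must moreover be a perfect square, which holds in this range
only for `n = -1` and `n = 0`. At the resulting zeros the denominator of `a` vanishes.
-/

section Quadratic

variable {R : Type*} [CommRing R] {n k : R}

/-- The numerator of `Δ = 1 - 4a` over the denominator `(k + n - 1) k (n + 1)²`, expanded in powers
of `k`; its vanishing is the borderline case. It is defined over any commutative ring so that the
arithmetic can be done in `ℤ`. -/
def borderlineQuadratic (n k : R) : R :=
  (n ^ 2 - 6 * n + 1) * k ^ 2 + (n - 1) * (n ^ 2 - 6 * n + 1) * k + 8 * n ^ 2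

theorem borderlineQuadratic_intCast (n k : ℤ) :
    borderlineQuadratic (n : R) k = (borderlineQuadratic n k : ℤ) := by
  simp [borderlineQuadratic]

theorem isCoprime_sq_sub_six_mul_add_one (n : R) : IsCoprime (n ^ 2 - 6 * n + 1) n :=
  ⟨1, 6 - n, by ring⟩

theorem dvd_eight_of_borderlineQuadratic_eq_zero (h : borderlineQuadratic n k = 0) :
    n ^ 2 - 6 * n + 1 ∣ 8 := by
  have hdvd : n ^ 2 - 6 * n + 1 ∣ 8 * n ^ 2 :=
    ⟨-(k * (k + n - 1)), by unfold borderlineQuadratic at h; linear_combination h⟩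
  exact (isCoprime_sq_sub_six_mul_add_one n).pow_right.dvd_of_dvd_mul_right hdvd

theorem isSquare_discrim_of_borderlineQuadratic_eq_zero (h : borderlineQuadratic n k = 0) :
    IsSquare (discrim (n ^ 2 - 6 * n + 1) ((n - 1) * (n ^ 2 - 6 * n + 1)) (8 * n ^ 2)) := by
  rw [discrim_eq_sq_of_quadratic_eq_zero (x := k) (by rwa [← sq])]
  exact IsSquare.sq _

end Quadratic

section IntegralZeros

variable {n k : ℤ}

theorem mem_Icc_of_sq_sub_six_mul_add_one_dvd_eight (h : n ^ 2 - 6 * n + 1 ∣ 8) :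
    n ∈ Set.Icc (-1) 7 := by
  have hle : n ^ 2 - 6 * n + 1 ≤ 8 := Int.le_of_dvd (by norm_num) h
  have hsq : (n - 3) ^ 2 ≤ 4 ^ 2 := by linarith
  obtain ⟨hlower, hupper⟩ := abs_le_of_sq_le_sq' hsq (by norm_num)
  exact ⟨by linarith, by linarith⟩

theorem eq_neg_one_or_eq_zero_of_isSquare_discrim (hn : n ∈ Set.Icc (-1) 7)
    (h : IsSquare (discrim (n ^ 2 - 6 * n + 1) ((n - 1) * (n ^ 2 - 6 * n + 1)) (8 * n ^ 2))) :
    n = -1 ∨ n = 0 := by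
  obtain ⟨hlower, hupper⟩ := hn
  interval_cases n <;> revert h <;> norm_num [discrim]

theorem borderlineQuadratic_eq_zero_iff :
    borderlineQuadratic n k = 0 ↔ n = -1 ∧ k = 1 ∨ n = 0 ∧ (k = 0 ∨ k = 1) := by
  constructor
  · intro h
    have hn := mem_Icc_of_sq_sub_six_mul_add_one_dvd_eight
      (dvd_eight_of_borderlineQuadratic_eq_zero h)
    rcases eq_neg_one_or_eq_zero_of_isSquare_discrim hn
      (isSquare_discrim_of_borderlineQuadratic_eq_zero h) with rfl | rfl
    · have hsq : (k - 1) ^ 2 = 0 := by unfold borderlineQuadratic at h; linarith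
      exact .inl ⟨rfl, sub_eq_zero.mp (sq_eq_zero_iff.mp hsq)⟩
    · have hmul : k * (k - 1) = 0 := by unfold borderlineQuadratic at h; linarith
      exact .inr ⟨rfl, (mul_eq_zero.mp hmul).imp_right sub_eq_zero.mp⟩
  · rintro (⟨rfl, rfl⟩ | ⟨rfl, rfl | rfl⟩) <;> norm_num [borderlineQuadratic]

end IntegralZeros

section Coefficient

variable {K : Type*} [Field K]

/-- The coefficient `a` in the Jacobi equation along the LOC segment of an LOMSE of
`(n, p, k)`-type. It takes the junk value `0` when `k = 0`, `k + n = 1` or `n = -1`. -/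
def jacobiCoeff (n k : K) : K :=
  2 * (k ^ 2 + k * n - k - n) * n / ((k + n - 1) * k * (n + 1) ^ 2)

theorem one_sub_four_mul_jacobiCoeff {n k : K} (hden : (k + n - 1) * k * (n + 1) ^ 2 ≠ 0) :
    1 - 4 * jacobiCoeff n k = borderlineQuadratic n k / ((k + n - 1) * k * (n + 1) ^ 2) := by
  rw [jacobiCoeff, borderlineQuadratic, eq_div_iff hden, sub_mul, mul_assoc 4,
    div_mul_cancel₀ _ hden]
  ring

theorem borderline_never_occurs_general [CharZero K] {n k : ℤ}
    (hden : (k + n - 1) * k * (n + 1) ^ 2 ≠ 0) :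
    borderlineQuadratic (n : K) k ≠ 0 ∧ jacobiCoeff (n : K) k ≠ 1 / 4 := by
  have hquad : borderlineQuadratic (n : K) k ≠ 0 := by
    rw [borderlineQuadratic_intCast, Int.cast_ne_zero, Ne, borderlineQuadratic_eq_zero_iff]
    rintro (⟨rfl, rfl⟩ | ⟨rfl, rfl | rfl⟩) <;> exact hden (by norm_num)
  refine ⟨hquad, fun ha => ?_⟩
  have hdenK : ((k : K) + n - 1) * k * (n + 1) ^ 2 ≠ 0 := mod_cast hden
  have hΔ : 1 - 4 * jacobiCoeff (n : K) k = 0 := by rw [ha]; norm_num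
  rw [one_sub_four_mul_jacobiCoeff hdenK] at hΔ
  exact div_ne_zero hquad hdenK hΔ

end Coefficient

/-- for odd `n ≥ 3` and even `k ≥ 2`, the borderline case
never occurs: the quadratic never vanishes, equivalently `a ≠ 1/4`. -/
theorem borderline_never_occurs (n k : ℕ) (hn3 : 3 ≤ n) (hodd : Odd n)
    (hk2 : 2 ≤ k) (heven : Even k) :
    ((n : ℝ) ^ 2 - 6 * n + 1) * (k : ℝ) ^ 2
        + ((n : ℝ) - 1) * ((n : ℝ) ^ 2 - 6 * n + 1) * k + 8 * (n : ℝ) ^ 2 ≠ 0 ∧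
    2 * ((k : ℝ) ^ 2 + k * n - k - n) * n
        / (((k : ℝ) + n - 1) * k * ((n : ℝ) + 1) ^ 2) ≠ 1 / 4 := by
  have hden : ((k : ℤ) + n - 1) * k * (n + 1) ^ 2 ≠ 0 :=
    mul_ne_zero (mul_ne_zero (by omega) (by omega)) (pow_ne_zero 2 (by omega))
  exact borderline_never_occurs_general (K := ℝ) hden
end

section
/- Let n, p, λ be real numbers and let ρ : (0, ∞) → ℝ be twice differentiable and satisfy for all r > 0 the evolution equation ρ''(r)/(1+ρ'(r)²) + (n−p)·ρ'(r)/r + p·(ρ'(r)/r − λ²·ρ(r)/r²)/(1 + λ²·ρ(r)²/r²) = 0. Define φ : ℝ → ℝ by φ(t) = ρ(e^t)/e^t and ψ = φ'. Then for all t ∈ ℝ: φ'(t) = ψ(t) and ψ'(t) = −ψ(t) − [(n − p + p/(1 + λ²·φ(t)²))·ψ(t) + (n − p + (1 − λ²)·p/(1 + λ²·φ(t)²))·φ(t)]·[1 + (φ(t) + ψ(t))²]. -/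
open Real

/-!
The evolution equation is homogeneous of degree `-1` under the scaling
`(r, ρ, ρ', ρ'') ↦ (c r, c ρ, ρ', c⁻¹ ρ'')`, so up to a nonzero factor it depends only on the
invariants `ρ / r`, `ρ'` and `r ρ''`. In the variable `t = log r` these are `φ`, `φ + ψ` and
`ψ + ψ'`, and solving the equation at `r = 1` for `r ρ''` gives an autonomous system.
-/

section EvolutionExpr

variable {K : Type*} [Field K]

/-- The left-hand side of the evolution equation at radius `r`, as a function of the 2-jet
`(u, v, w) = (ρ r, ρ' r, ρ'' r)` of the profile. -/
def evolutionExpr (n p lam r u v w : K) : K :=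
  w / (1 + v ^ 2) + (n - p) * v / r
    + p * (v / r - lam ^ 2 * u / r ^ 2) / (1 + lam ^ 2 * u ^ 2 / r ^ 2)

theorem evolutionExpr_eq_inv_mul (n p lam u v w : K) {r : K} (hr : r ≠ 0) :
    evolutionExpr n p lam r u v w = r⁻¹ * evolutionExpr n p lam 1 (u / r) v (r * w) := by
  have slope : v / r - lam ^ 2 * u / r ^ 2 = r⁻¹ * (v - lam ^ 2 * (u / r)) := by ring
  have denom : lam ^ 2 * u ^ 2 / r ^ 2 = lam ^ 2 * (u / r) ^ 2 := by ring
  have second : w = r⁻¹ * (r * w) := (inv_mul_cancel_left₀ hr w).symm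
  simp only [evolutionExpr, slope, denom, one_pow, div_one]
  nth_rewrite 1 [second]
  ring

theorem evolutionExpr_one_eq_zero_iff (n p lam : K) {φ ψ w : K} (h : 1 + (φ + ψ) ^ 2 ≠ 0) :
    evolutionExpr n p lam 1 φ (φ + ψ) w = 0 ↔
      w = -(((n - p + p / (1 + lam ^ 2 * φ ^ 2)) * ψ
          + (n - p + (1 - lam ^ 2) * p / (1 + lam ^ 2 * φ ^ 2)) * φ)
        * (1 + (φ + ψ) ^ 2)) := by
  have collect : evolutionExpr n p lam 1 φ (φ + ψ) w = w / (1 + (φ + ψ) ^ 2)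
      + ((n - p + p / (1 + lam ^ 2 * φ ^ 2)) * ψ
        + (n - p + (1 - lam ^ 2) * p / (1 + lam ^ 2 * φ ^ 2)) * φ) := by
    simp only [evolutionExpr, one_pow, div_one]
    ring
  rw [collect, add_eq_zero_iff_eq_neg, div_eq_iff h, neg_mul]

end EvolutionExpr

section LogProfile

open scoped Topology

/-- The slope `ρ r / r` of a profile in the logarithmic variable `t = log r`: the function `φ` of
the planar system. -/
noncomputable def logProfile (ρ : ℝ → ℝ) (t : ℝ) : ℝ :=
  ρ (exp t) / exp t

variable {ρ : ℝ → ℝ} {t : ℝ}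

theorem hasDerivAt_logProfile {v : ℝ} (h : HasDerivAt ρ v (exp t)) :
    HasDerivAt (logProfile ρ) (v - logProfile ρ t) t := by
  have quotient := (h.comp t (hasDerivAt_exp t)).fun_div (hasDerivAt_exp t) (exp_ne_zero t)
  refine quotient.congr_deriv ?_
  simp only [logProfile, Function.comp_apply]
  field_simp

theorem deriv_logProfile (h : DifferentiableAt ℝ ρ (exp t)) :
    deriv (logProfile ρ) t = deriv ρ (exp t) - logProfile ρ t :=
  (hasDerivAt_logProfile h.hasDerivAt).deriv

theorem hasDerivAt_deriv_logProfile {w : ℝ} (h : ∀ᶠ r in 𝓝 (exp t), DifferentiableAt ℝ ρ r)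
    (h' : HasDerivAt (deriv ρ) w (exp t)) :
    HasDerivAt (deriv (logProfile ρ)) (exp t * w - deriv (logProfile ρ) t) t := by
  have formula : deriv (logProfile ρ) =ᶠ[𝓝 t] fun s => deriv ρ (exp s) - logProfile ρ s :=
    (continuous_exp.continuousAt.eventually h).mono fun _ => deriv_logProfile
  have chain : HasDerivAt (fun s => deriv ρ (exp s)) (exp t * w) t :=
    (h'.comp t (hasDerivAt_exp t)).congr_deriv (mul_comm _ _)
  have profile : HasDerivAt (logProfile ρ) (deriv (logProfile ρ) t) t :=
    (hasDerivAt_logProfile h.self_of_nhds.hasDerivAt).differentiableAt.hasDerivAt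
  exact (chain.fun_sub profile).congr_of_eventuallyEq formula

theorem evolution_to_dynamical_system_general (n p lam : ℝ)
    (h : ∀ᶠ r in 𝓝 (exp t), DifferentiableAt ℝ ρ r)
    (h' : DifferentiableAt ℝ (deriv ρ) (exp t)) {φ ψ : ℝ → ℝ}
    (hφ : φ = logProfile ρ) (hψ : ψ = deriv φ) :
    evolutionExpr n p lam (exp t) (ρ (exp t)) (deriv ρ (exp t)) (deriv (deriv ρ) (exp t)) = 0 ↔
      deriv ψ t = -ψ t
        - ((n - p + p / (1 + lam ^ 2 * φ t ^ 2)) * ψ t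
            + (n - p + (1 - lam ^ 2) * p / (1 + lam ^ 2 * φ t ^ 2)) * φ t)
          * (1 + (φ t + ψ t) ^ 2) := by
  have slope : ρ (exp t) / exp t = φ t := by rw [hφ, logProfile]
  have first : deriv ρ (exp t) = φ t + ψ t := by
    rw [hψ, hφ, deriv_logProfile h.self_of_nhds, add_sub_cancel]
  have second : exp t * deriv (deriv ρ) (exp t) = ψ t + deriv ψ t := by
    rw [hψ, hφ, (hasDerivAt_deriv_logProfile h h'.hasDerivAt).deriv, add_sub_cancel]
  have speed_ne_zero : 1 + (φ t + ψ t) ^ 2 ≠ 0 := by positivity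
  rw [evolutionExpr_eq_inv_mul _ _ _ _ _ _ (exp_ne_zero t), slope, second, first,
    mul_eq_zero_iff_left (inv_ne_zero (exp_ne_zero t)),
    evolutionExpr_one_eq_zero_iff n p lam speed_ne_zero]
  constructor <;> intro <;> linarith

end LogProfile

/-- the substitution `t = log r`, `φ(t) = ρ(e^t)/e^t`, `ψ = φ'`
converts the evolution equation into the first-order autonomous planar system. -/
theorem evolution_to_dynamical_system (n p lam : ℝ) (ρ : ℝ → ℝ)
    (hdiff : ∀ r > (0 : ℝ), DifferentiableAt ℝ ρ r ∧ DifferentiableAt ℝ (deriv ρ) r)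
    (hode : ∀ r > (0 : ℝ),
      deriv (deriv ρ) r / (1 + deriv ρ r ^ 2) + (n - p) * deriv ρ r / r
        + p * (deriv ρ r / r - lam ^ 2 * ρ r / r ^ 2)
          / (1 + lam ^ 2 * ρ r ^ 2 / r ^ 2) = 0)
    (φ ψ : ℝ → ℝ)
    (hφ : φ = fun t => ρ (Real.exp t) / Real.exp t)
    (hψ : ψ = deriv φ) :
    ∀ t : ℝ,
      deriv φ t = ψ t ∧
      deriv ψ t = -ψ t
        - ((n - p + p / (1 + lam ^ 2 * φ t ^ 2)) * ψ t
            + (n - p + (1 - lam ^ 2) * p / (1 + lam ^ 2 * φ t ^ 2)) * φ t)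
          * (1 + (φ t + ψ t) ^ 2) := by
  intro t
  have hρ : ∀ᶠ r in nhds (exp t), DifferentiableAt ℝ ρ r :=
    (eventually_gt_nhds (exp_pos t)).mono fun r hr => (hdiff r hr).1
  exact ⟨congrFun hψ.symm t, (evolution_to_dynamical_system_general n p lam hρ
    (hdiff _ (exp_pos t)).2 hφ hψ).mp (hode _ (exp_pos t))⟩
end
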